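/- arXiv:1708.06659 — 3 statements merged into one kernel-verified Lean document; each statement's English description precedes it below -/
import Mathlib

section
/- Let d, N ∈ ℕ, 1 < p ≤ r < 2, let Q ⊂ ℝ^d be a cube with sidelength R > 0, and let w : ℝ^d → ℝ^N be twice continuously differentiable on a neighborhood of the closure of 5Q. Then for every h ∈ ℝ^d with 0 < |h| ≤ R: |h|^{−2r} ⨍_Q |w(x+2h) − 2w(x+h) + w(x)|^r dx ≤ 5^d ⨍_{5Q}|∇²w|^r, and ⨍_{5Q}|∇²w|^r ≤ (⨍_{5Q}|∇w|^{p−2}|∇²w|²)^{r/2} (⨍_{5Q}|∇w|^{r(2−p)/(2−r)})^{(2−r)/2}, where the integral ⨍_{5Q}|∇w|^{p−2}|∇²w|² is interpreted as an integral with values in [0,∞] (the integrand being 0 where ∇²w vanishes and +∞ where ∇w vanishes but ∇²w does not), the inequality holding trivially when the right-hand side is infinite. -/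
open MeasureTheory Metric
open scoped ENNReal

noncomputable section

/-- The open axis-parallel cube with center `c` and sidelength `R`. -/
def cube {d : ℕ} (c : EuclideanSpace ℝ (Fin d)) (R : ℝ) : Set (EuclideanSpace ℝ (Fin d)) :=
  {x | ∀ i, |x i - c i| < R / 2}

/-- Frobenius norm of the first derivative array of `w` at `x`. -/
def gradFrob {d N : ℕ} (w : EuclideanSpace ℝ (Fin d) → EuclideanSpace ℝ (Fin N))
    (x : EuclideanSpace ℝ (Fin d)) : ℝ :=
  Real.sqrt (∑ α : Fin N, ∑ i : Fin d, (fderiv ℝ w x (EuclideanSpace.single i 1) α) ^ 2)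

/-- Frobenius norm of the second derivative array of `w` at `x`. -/
def hessFrob {d N : ℕ} (w : EuclideanSpace ℝ (Fin d) → EuclideanSpace ℝ (Fin N))
    (x : EuclideanSpace ℝ (Fin d)) : ℝ :=
  Real.sqrt (∑ α : Fin N, ∑ i : Fin d, ∑ j : Fin d,
    (iteratedFDeriv ℝ 2 w x
      ![EuclideanSpace.single i 1, EuclideanSpace.single j 1] α) ^ 2)

/-!
For the first estimate, the fundamental theorem of calculus and Jensen's inequality on `[0, 1]`
bound `|Δ_h v(x)| ^ r` by the average of `|Dv(x + sh) h| ^ r` over `s`. Integrating in `x` and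
translating gives `∫_A |Δ_h v| ^ r ≤ ∫_B |Dv h| ^ r` as soon as `B` contains `A + [0, 1] h`. This
is applied to `v = Δ_h w` from `Q` to `3Q` and to `v = Dw h` from `3Q` to `5Q`, and then
`|D²w(h, h)| ≤ |h|² |∇²w|` by Cauchy–Schwarz.

The second estimate is Hölder's inequality with exponents `2 / r` and `2 / (2 - r)` for
`|∇²w| ^ r = (|∇²w|² / k) ^ (r / 2) * k ^ (r / 2)`, where `k = |∇w| ^ (2 - p)`. The factorization
fails only where `∇w = 0 ≠ ∇²w`. If this set has positive measure, the first factor on the right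
is infinite, so the only danger is the product `∞ * 0`. The second factor vanishes only if
`∇w = 0` almost everywhere, hence by continuity everywhere, and then `∇²w = 0`.
-/

open fwdDiff Set

section Holder

variable {α : Type*} [MeasurableSpace α] {μ : Measure α}

theorem rpow_lintegral_le_lintegral_rpow [IsProbabilityMeasure μ] {r : ℝ} (hr : 1 ≤ r)
    {f : α → ℝ≥0∞} (hf : AEMeasurable f μ) : (∫⁻ x, f x ∂μ) ^ r ≤ ∫⁻ x, f x ^ r ∂μ := by
  have hle : ∫⁻ x, f x ∂μ ≤ (∫⁻ x, f x ^ r ∂μ) ^ (1 / r) := by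
    simpa [eLpNorm'] using
      eLpNorm'_le_eLpNorm'_of_exponent_le one_pos hr μ hf.aestronglyMeasurable
  rwa [← ENNReal.le_rpow_inv_iff (one_pos.trans_le hr), ← one_div]

theorem rpow_eq_div_rpow_mul_rpow {a b : ℝ≥0∞} (hb : b ≠ ∞) (hab : b = 0 → a = 0) {r s : ℝ}
    (hr : 0 < r) (hrs : r < s) :
    a ^ r = (a ^ s / b) ^ (r / s) * (b ^ (r / (s - r))) ^ ((s - r) / s) := by
  have hs : 0 < s := hr.trans hrs
  have hsr : 0 < s - r := sub_pos.2 hrs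
  rw [ENNReal.div_rpow_of_nonneg _ _ (by positivity), ← ENNReal.rpow_mul, ← ENNReal.rpow_mul,
    mul_div_cancel₀ r hs.ne', div_mul_div_cancel₀ hsr.ne']
  rcases eq_or_ne b 0 with rfl | hb₀
  · simp [hab rfl, ENNReal.zero_rpow_of_pos hr]
  · rw [ENNReal.div_mul_cancel]
    · simp [ENNReal.rpow_eq_zero_iff, hb₀, hb]
    · simp [ENNReal.rpow_eq_top_iff, hb₀, hb]

theorem lintegral_rpow_le_lintegral_div_rpow_mul_lintegral_rpow {f k : α → ℝ≥0∞}
    (hf : AEMeasurable f μ) (hk : AEMeasurable k μ) (hk_top : ∀ᵐ x ∂μ, k x ≠ ∞)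
    (hkf : k =ᵐ[μ] 0 → f =ᵐ[μ] 0) {r s : ℝ} (hr : 0 < r) (hrs : r < s) :
    ∫⁻ x, f x ^ r ∂μ ≤
      (∫⁻ x, f x ^ s / k x ∂μ) ^ (r / s) * (∫⁻ x, k x ^ (r / (s - r)) ∂μ) ^ ((s - r) / s) := by
  have hs : 0 < s := hr.trans hrs
  have : 0 < s - r := sub_pos.2 hrs
  have hdiv : AEMeasurable (fun x ↦ f x ^ s / k x) μ := (hf.pow_const s).div hk
  have hpow : AEMeasurable (fun x ↦ k x ^ (r / (s - r))) μ := hk.pow_const _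
  rcases eq_or_ne (∫⁻ x, k x ^ (r / (s - r)) ∂μ) 0 with hzero | hne_zero
  · have hk₀ : k =ᵐ[μ] 0 := by
      filter_upwards [(lintegral_eq_zero_iff' hpow).1 hzero] with x hx
      exact (ENNReal.rpow_eq_zero_iff_of_pos (by positivity)).1 hx
    have hlhs : ∫⁻ x, f x ^ r ∂μ = 0 := by
      rw [lintegral_eq_zero_iff' (hf.pow_const r)]
      filter_upwards [hkf hk₀] with x hx
      simp [hx, ENNReal.zero_rpow_of_pos hr]
    exact hlhs.trans_le zero_le
  rcases eq_or_ne (∫⁻ x, f x ^ s / k x ∂μ) ∞ with htop | hne_top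
  · have hpos : (∫⁻ x, k x ^ (r / (s - r)) ∂μ) ^ ((s - r) / s) ≠ 0 := by
      rwa [Ne, ENNReal.rpow_eq_zero_iff_of_pos (by positivity)]
    rw [htop, ENNReal.top_rpow_of_pos (by positivity), ENNReal.top_mul hpos]
    exact le_top
  have hpointwise : ∀ᵐ x ∂μ,
      f x ^ r = (f x ^ s / k x) ^ (r / s) * (k x ^ (r / (s - r))) ^ ((s - r) / s) := by
    filter_upwards [hk_top, ae_lt_top' hdiv hne_top] with x hkx hx
    refine rpow_eq_div_rpow_mul_rpow hkx (fun hk₀ ↦ ?_) hr hrs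
    by_contra hf₀
    have : f x ^ s ≠ 0 := by rwa [Ne, ENNReal.rpow_eq_zero_iff_of_pos hs]
    exact hx.ne (by rw [hk₀, ENNReal.div_zero this])
  rw [lintegral_congr_ae hpointwise]
  exact ENNReal.lintegral_mul_norm_pow_le hdiv hpow (by positivity) (by positivity)
    (by field_simp; ring)

end Holder

theorem fwdDiff_fwdDiff_apply {M G : Type*} [AddCommMonoid M] [AddCommGroup G] (h : M)
    (f : M → G) (x : M) : Δ_[h] (Δ_[h] f) x = f (x + 2 • h) - 2 • f (x + h) + f x := by
  simp only [fwdDiff, two_nsmul, add_assoc]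
  abel

theorem setLIntegral_comp_add_right_le {G : Type*} [AddGroup G] [MeasurableSpace G]
    [MeasurableAdd G] {μ : Measure G} [μ.IsAddRightInvariant] {A B : Set G} {a : G}
    (hAB : ∀ x ∈ A, x + a ∈ B) (f : G → ℝ≥0∞) :
    ∫⁻ x in A, f (x + a) ∂μ ≤ ∫⁻ y in B, f y ∂μ :=
  (lintegral_mono_set hAB).trans_eq <|
    (measurePreserving_add_right μ a).setLIntegral_comp_preimage_emb
      (measurableEmbedding_addRight a) f B

section Difference

variable {E F : Type*} [NormedAddCommGroup E] [NormedSpace ℝ E]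
  [NormedAddCommGroup F] [NormedSpace ℝ F] {h x : E} {v : E → F} {A B C : Set E} {r : ℝ}

theorem contDiffOn_fwdDiff {n : WithTop ℕ∞} (hv : ContDiffOn ℝ n v C)
    (hBC : ∀ x ∈ B, x ∈ C ∧ x + h ∈ C) : ContDiffOn ℝ n (Δ_[h] v) B :=
  (hv.comp (contDiff_id.add contDiff_const).contDiffOn fun x hx ↦ (hBC x hx).2).sub
    (hv.mono fun x hx ↦ (hBC x hx).1)

theorem fderiv_fwdDiff (hx : DifferentiableAt ℝ v x) (hxh : DifferentiableAt ℝ v (x + h)) :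
    fderiv ℝ (Δ_[h] v) x = Δ_[h] (fderiv ℝ v) x := by
  have hshift : DifferentiableAt ℝ (fun y ↦ v (y + h)) x := hxh.comp x (by fun_prop)
  exact (fderiv_fun_sub hshift hx).trans (by rw [fderiv_comp_add_right, fwdDiff])

theorem enorm_fwdDiff_rpow_le (hr : 1 ≤ r) (hB : IsOpen B) (hv : ContDiffOn ℝ 1 v B)
    (hx : ∀ s ∈ Icc (0 : ℝ) 1, x + s • h ∈ B) :
    ‖Δ_[h] v x‖ₑ ^ r ≤ ∫⁻ s in Icc (0 : ℝ) 1, ‖fderiv ℝ v (x + s • h) h‖ₑ ^ r := by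
  have hline : ContDiffOn ℝ 1 (fun s : ℝ ↦ v (x + s • h)) (Icc 0 1) :=
    hv.comp (by fun_prop) hx
  have hderiv : ∀ s ∈ Icc (0 : ℝ) 1,
      deriv (fun s : ℝ ↦ v (x + s • h)) s = fderiv ℝ v (x + s • h) h := by
    intro s hs
    have hv_at : DifferentiableAt ℝ v (x + s • h) :=
      (hv.differentiableOn one_ne_zero).differentiableAt (hB.mem_nhds (hx s hs))
    have hline_at : HasDerivAt (fun s : ℝ ↦ x + s • h) h s := by
      simpa using ((hasDerivAt_id s).smul_const h).const_add x
    exact (hv_at.hasFDerivAt.comp_hasDerivAt s hline_at).deriv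
  have hcont : ContinuousOn (fun s : ℝ ↦ fderiv ℝ v (x + s • h) h) (Icc 0 1) :=
    ((hv.continuousOn_fderiv_of_isOpen hB le_rfl).comp (by fun_prop) hx).clm_apply
      continuousOn_const
  have : IsProbabilityMeasure (volume.restrict (Icc (0 : ℝ) 1)) := ⟨by simp⟩
  calc ‖Δ_[h] v x‖ₑ ^ r
      ≤ (∫⁻ s in Icc (0 : ℝ) 1, ‖deriv (fun s : ℝ ↦ v (x + s • h)) s‖ₑ) ^ r := by
        gcongr
        simpa [fwdDiff] using
          enorm_sub_le_lintegral_deriv_of_contDiffOn_Icc hline zero_le_one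
    _ = (∫⁻ s in Icc (0 : ℝ) 1, ‖fderiv ℝ v (x + s • h) h‖ₑ) ^ r := by
        rw [setLIntegral_congr_fun measurableSet_Icc fun s hs ↦ by rw [hderiv s hs]]
    _ ≤ ∫⁻ s in Icc (0 : ℝ) 1, ‖fderiv ℝ v (x + s • h) h‖ₑ ^ r :=
        rpow_lintegral_le_lintegral_rpow hr
          (hcont.aestronglyMeasurable measurableSet_Icc).enorm

variable [MeasurableSpace E] [BorelSpace E] [SecondCountableTopology E] [CompleteSpace F]
  {μ : Measure E} [SFinite μ] [μ.IsAddRightInvariant]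

theorem setLIntegral_enorm_fwdDiff_rpow_le (hr : 1 ≤ r) (hA : MeasurableSet A) (hB : IsOpen B)
    (hAB : ∀ x ∈ A, ∀ s ∈ Icc (0 : ℝ) 1, x + s • h ∈ B) (hv : ContDiffOn ℝ 1 v B) :
    ∫⁻ x in A, ‖Δ_[h] v x‖ₑ ^ r ∂μ ≤ ∫⁻ y in B, ‖fderiv ℝ v y h‖ₑ ^ r ∂μ := by
  borelize F
  have hmeas : Measurable fun q : E × ℝ ↦ ‖fderiv ℝ v (q.1 + q.2 • h) h‖ₑ ^ r :=
    ((measurable_fderiv_apply_const ℝ v h).comp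
      (g := fun y ↦ fderiv ℝ v y h) (f := fun q : E × ℝ ↦ q.1 + q.2 • h)
      (by fun_prop)).enorm.pow_const r
  calc ∫⁻ x in A, ‖Δ_[h] v x‖ₑ ^ r ∂μ
      ≤ ∫⁻ x in A, (∫⁻ s in Icc (0 : ℝ) 1, ‖fderiv ℝ v (x + s • h) h‖ₑ ^ r) ∂μ :=
        setLIntegral_mono' hA fun x hx ↦ enorm_fwdDiff_rpow_le hr hB hv (hAB x hx)
    _ = ∫⁻ s in Icc (0 : ℝ) 1, (∫⁻ x in A, ‖fderiv ℝ v (x + s • h) h‖ₑ ^ r ∂μ) :=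
        lintegral_lintegral_swap hmeas.aemeasurable
    _ ≤ ∫⁻ _ in Icc (0 : ℝ) 1, (∫⁻ y in B, ‖fderiv ℝ v y h‖ₑ ^ r ∂μ) :=
        setLIntegral_mono' measurableSet_Icc fun s hs ↦
          setLIntegral_comp_add_right_le (fun x hx ↦ hAB x hx s hs)
            fun y ↦ ‖fderiv ℝ v y h‖ₑ ^ r
    _ = ∫⁻ y in B, ‖fderiv ℝ v y h‖ₑ ^ r ∂μ := by simp

theorem setLIntegral_enorm_fwdDiff_fwdDiff_rpow_le (hr : 1 ≤ r) (hA : MeasurableSet A)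
    (hB : IsOpen B) (hC : IsOpen C) (hAB : ∀ x ∈ A, ∀ s ∈ Icc (0 : ℝ) 1, x + s • h ∈ B)
    (hBC : ∀ x ∈ B, ∀ s ∈ Icc (0 : ℝ) 1, x + s • h ∈ C) (hv : ContDiffOn ℝ 2 v C) :
    ∫⁻ x in A, ‖Δ_[h] (Δ_[h] v) x‖ₑ ^ r ∂μ ≤
      ∫⁻ y in C, ‖fderiv ℝ (fderiv ℝ v) y h h‖ₑ ^ r ∂μ := by
  have hends : ∀ x ∈ B, x ∈ C ∧ x + h ∈ C := fun x hx ↦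
    ⟨by simpa using hBC x hx 0 (by simp), by simpa using hBC x hx 1 (by simp)⟩
  have hv₁ : ContDiffOn ℝ 1 v C := hv.of_le one_le_two
  have hv_at : ∀ y ∈ C, DifferentiableAt ℝ v y := fun y hy ↦
    (hv₁.differentiableOn one_ne_zero).differentiableAt (hC.mem_nhds hy)
  have hv' : ContDiffOn ℝ 1 (fderiv ℝ v) C := hv.fderiv_of_isOpen hC (by norm_num)
  have hv'_at : ∀ y ∈ C, DifferentiableAt ℝ (fderiv ℝ v) y := fun y hy ↦
    (hv'.differentiableOn one_ne_zero).differentiableAt (hC.mem_nhds hy)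
  calc ∫⁻ x in A, ‖Δ_[h] (Δ_[h] v) x‖ₑ ^ r ∂μ
      ≤ ∫⁻ y in B, ‖fderiv ℝ (Δ_[h] v) y h‖ₑ ^ r ∂μ :=
        setLIntegral_enorm_fwdDiff_rpow_le hr hA hB hAB (contDiffOn_fwdDiff hv₁ hends)
    _ = ∫⁻ y in B, ‖Δ_[h] (fun z ↦ fderiv ℝ v z h) y‖ₑ ^ r ∂μ :=
        setLIntegral_congr_fun hB.measurableSet fun y hy ↦ by
          simp [fderiv_fwdDiff (hv_at y (hends y hy).1) (hv_at _ (hends y hy).2), fwdDiff]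
    _ ≤ ∫⁻ y in C, ‖fderiv ℝ (fun z ↦ fderiv ℝ v z h) y h‖ₑ ^ r ∂μ :=
        setLIntegral_enorm_fwdDiff_rpow_le hr hB.measurableSet hC hBC
          (hv'.clm_apply contDiffOn_const)
    _ = ∫⁻ y in C, ‖fderiv ℝ (fderiv ℝ v) y h h‖ₑ ^ r ∂μ :=
        setLIntegral_congr_fun hC.measurableSet fun y hy ↦ by
          simp [fderiv_clm_apply (hv'_at y hy) (differentiableAt_const h)]

end Difference

section Cube

variable {d : ℕ} (c : EuclideanSpace ℝ (Fin d)) (R : ℝ)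

theorem cube_eq_preimage_pi_ball :
    cube c R = WithLp.ofLp ⁻¹' Set.pi univ fun i ↦ ball (c i) (R / 2) := by
  ext x
  simp [cube, Real.dist_eq]

theorem isOpen_cube : IsOpen (cube c R) := by
  rw [cube_eq_preimage_pi_ball]
  exact (isOpen_set_pi finite_univ fun _ _ ↦ isOpen_ball).preimage (by fun_prop)

theorem isBounded_cube : Bornology.IsBounded (cube c R) := by
  rw [cube_eq_preimage_pi_ball]
  exact (PiLp.antilipschitzWith_ofLp 2 fun _ : Fin d ↦ ℝ).isBounded_preimage
    (Bornology.IsBounded.pi fun _ ↦ isBounded_ball)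

theorem volume_cube : volume (cube c R) = ENNReal.ofReal R ^ d := by
  rw [cube_eq_preimage_pi_ball, (PiLp.volume_preserving_ofLp (Fin d)).measure_preimage
    (MeasurableSet.univ_pi fun _ ↦ measurableSet_ball).nullMeasurableSet, volume_pi_pi]
  simp [mul_div_cancel₀]

variable {c R}

theorem add_smul_mem_cube {T : ℝ} {h x : EuclideanSpace ℝ (Fin d)} (hh : ‖h‖ ≤ T)
    (hx : x ∈ cube c R) {s : ℝ} (hs : s ∈ Icc (0 : ℝ) 1) : x + s • h ∈ cube c (R + 2 * T) := by
  intro i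
  have hshift : |s * h i| ≤ T := calc
    |s * h i| ≤ 1 * ‖h‖ := by
      rw [abs_mul, abs_of_nonneg hs.1]
      exact mul_le_mul hs.2 (PiLp.norm_apply_le h i) (abs_nonneg _) zero_le_one
    _ ≤ T := by rwa [one_mul]
  calc |(x + s • h) i - c i| = |(x i - c i) + s * h i| := by
        simp [add_sub_right_comm]
    _ ≤ |x i - c i| + |s * h i| := abs_add_le _ _
    _ < (R + 2 * T) / 2 := by linarith [hx i]

end Cube

theorem norm_map_sq_le_norm_sq_mul_sum {𝕜 E F ι : Type*} [RCLike 𝕜] [NormedAddCommGroup E]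
    [InnerProductSpace 𝕜 E] [SeminormedAddCommGroup F] [NormedSpace 𝕜 F] [Fintype ι]
    (b : OrthonormalBasis ι 𝕜 E) (L : E →ₗ[𝕜] F) (x : E) :
    ‖L x‖ ^ 2 ≤ ‖x‖ ^ 2 * ∑ i, ‖L (b i)‖ ^ 2 := by
  have hnorm : ‖L x‖ ≤ ∑ i, ‖inner 𝕜 (b i) x‖ * ‖L (b i)‖ := by
    conv_lhs => rw [← b.sum_repr' x]
    simpa [norm_smul] using norm_sum_le Finset.univ fun i ↦ L (inner 𝕜 (b i) x • b i)
  calc ‖L x‖ ^ 2 ≤ (∑ i, ‖inner 𝕜 (b i) x‖ * ‖L (b i)‖) ^ 2 := by gcongr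
    _ ≤ (∑ i, ‖inner 𝕜 (b i) x‖ ^ 2) * ∑ i, ‖L (b i)‖ ^ 2 :=
        Finset.sum_mul_sq_le_sq_mul_sq _ _ _
    _ = ‖x‖ ^ 2 * ∑ i, ‖L (b i)‖ ^ 2 := by rw [b.sum_sq_norm_inner_right]

section Frobenius

variable {d N : ℕ} {w : EuclideanSpace ℝ (Fin d) → EuclideanSpace ℝ (Fin N)}
  {x : EuclideanSpace ℝ (Fin d)} {U V : Set (EuclideanSpace ℝ (Fin d))}

variable (w x) in
theorem gradFrob_eq_sqrt_sum_norm_sq :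
    gradFrob w x = √(∑ i, ‖fderiv ℝ w x (EuclideanSpace.single i 1)‖ ^ 2) := by
  simp only [gradFrob, EuclideanSpace.norm_sq_eq, Real.norm_eq_abs, sq_abs]
  rw [Finset.sum_comm]

variable (w x) in
theorem hessFrob_eq_sqrt_sum_norm_sq :
    hessFrob w x = √(∑ i, ∑ j, ‖fderiv ℝ (fderiv ℝ w) x (EuclideanSpace.single i 1)
      (EuclideanSpace.single j 1)‖ ^ 2) := by
  simp only [hessFrob, EuclideanSpace.norm_sq_eq, Real.norm_eq_abs, sq_abs,
    iteratedFDeriv_two_apply, Matrix.cons_val_zero, Matrix.cons_val_one]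
  rw [Finset.sum_comm]
  exact congrArg _ <| Finset.sum_congr rfl fun i _ ↦ Finset.sum_comm

variable (w x) in
theorem gradFrob_nonneg : 0 ≤ gradFrob w x := Real.sqrt_nonneg _

variable (w x) in
theorem hessFrob_nonneg : 0 ≤ hessFrob w x := Real.sqrt_nonneg _

variable (w) in
theorem measurable_gradFrob : Measurable (gradFrob w) := by
  simp only [funext (gradFrob_eq_sqrt_sum_norm_sq w)]
  exact (Finset.measurable_sum _ fun i _ ↦
    (measurable_fderiv_apply_const ℝ w _).norm.pow_const 2).sqrt

variable (w) in
theorem measurable_hessFrob : Measurable (hessFrob w) := by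
  simp only [funext (hessFrob_eq_sqrt_sum_norm_sq w)]
  refine (Finset.measurable_sum _ fun i _ ↦ Finset.measurable_sum _ fun j _ ↦ ?_).sqrt
  exact ((ContinuousLinearMap.measurable_apply _).comp
    (measurable_fderiv_apply_const ℝ (fderiv ℝ w) _)).norm.pow_const 2

theorem continuousOn_gradFrob (hU : IsOpen U) (hw : ContDiffOn ℝ 1 w U) :
    ContinuousOn (gradFrob w) U := by
  have hw' : ContinuousOn (fderiv ℝ w) U := hw.continuousOn_fderiv_of_isOpen hU le_rfl
  simp only [funext (gradFrob_eq_sqrt_sum_norm_sq w)]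
  fun_prop

theorem continuousOn_hessFrob (hU : IsOpen U) (hw : ContDiffOn ℝ 2 w U) :
    ContinuousOn (hessFrob w) U := by
  have hw'' : ContinuousOn (fderiv ℝ (fderiv ℝ w)) U :=
    (hw.fderiv_of_isOpen hU (by norm_num)).continuousOn_fderiv_of_isOpen hU le_rfl
  simp only [funext (hessFrob_eq_sqrt_sum_norm_sq w)]
  fun_prop

variable (w x) in
theorem norm_fderiv_apply_le (h : EuclideanSpace ℝ (Fin d)) :
    ‖fderiv ℝ w x h‖ ≤ ‖h‖ * gradFrob w x := by
  refine le_of_sq_le_sq ?_ (mul_nonneg (norm_nonneg h) (gradFrob_nonneg w x))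
  rw [mul_pow, gradFrob_eq_sqrt_sum_norm_sq, Real.sq_sqrt (by positivity)]
  simpa using norm_map_sq_le_norm_sq_mul_sum (EuclideanSpace.basisFun (Fin d) ℝ)
    (fderiv ℝ w x).toLinearMap h

variable (w x) in
theorem norm_fderiv_fderiv_apply_le (h : EuclideanSpace ℝ (Fin d)) :
    ‖fderiv ℝ (fderiv ℝ w) x h h‖ ≤ ‖h‖ ^ 2 * hessFrob w x := by
  set L := fderiv ℝ (fderiv ℝ w) x
  let e : Fin d → EuclideanSpace ℝ (Fin d) := fun i ↦ EuclideanSpace.single i 1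
  refine le_of_sq_le_sq ?_ (mul_nonneg (sq_nonneg _) (hessFrob_nonneg w x))
  rw [mul_pow, hessFrob_eq_sqrt_sum_norm_sq, Real.sq_sqrt (by positivity)]
  calc ‖L h h‖ ^ 2 ≤ ‖h‖ ^ 2 * ∑ i, ‖L (e i) h‖ ^ 2 := by
        simpa using norm_map_sq_le_norm_sq_mul_sum (EuclideanSpace.basisFun (Fin d) ℝ)
          (L.flip h).toLinearMap h
    _ ≤ ‖h‖ ^ 2 * ∑ i, ‖h‖ ^ 2 * ∑ j, ‖L (e i) (e j)‖ ^ 2 := by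
        gcongr with i
        simpa using norm_map_sq_le_norm_sq_mul_sum (EuclideanSpace.basisFun (Fin d) ℝ)
          (L (e i)).toLinearMap h
    _ = (‖h‖ ^ 2) ^ 2 * ∑ i, ∑ j, ‖L (e i) (e j)‖ ^ 2 := by
        rw [← Finset.mul_sum]
        ring

theorem hessFrob_eq_zero_of_gradFrob_eqOn_zero (hV : IsOpen V) (hg : EqOn (gradFrob w) 0 V)
    (hx : x ∈ V) : hessFrob w x = 0 := by
  have hfderiv : fderiv ℝ w =ᶠ[nhds x] fun _ ↦ 0 := by
    filter_upwards [hV.mem_nhds hx] with y hy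
    ext1 h
    simpa [hg hy] using norm_fderiv_apply_le w y h
  simp [hessFrob_eq_sqrt_sum_norm_sq, hfderiv.fderiv_eq]

theorem hessFrob_ae_eq_zero (hV : IsOpen V) (hw : ContDiffOn ℝ 1 w V)
    (hg : gradFrob w =ᵐ[volume.restrict V] 0) : hessFrob w =ᵐ[volume.restrict V] 0 := by
  have hg_eqOn : EqOn (gradFrob w) 0 V :=
    Measure.eqOn_open_of_ae_eq hg hV (continuousOn_gradFrob hV hw) continuousOn_const
  filter_upwards [ae_restrict_mem hV.measurableSet] with x hx
  exact hessFrob_eq_zero_of_gradFrob_eqOn_zero hV hg_eqOn hx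

end Frobenius

section Main

variable {d N : ℕ} {w : EuclideanSpace ℝ (Fin d) → EuclideanSpace ℝ (Fin N)}
  {c h : EuclideanSpace ℝ (Fin d)} {R T p r : ℝ}

theorem integrableOn_hessFrob_rpow {U V : Set (EuclideanSpace ℝ (Fin d))} (hU : IsOpen U)
    (hw : ContDiffOn ℝ 2 w U) (hV : Bornology.IsBounded V) (hVU : closure V ⊆ U) (hr : 0 ≤ r) :
    IntegrableOn (fun x ↦ hessFrob w x ^ r) V := by
  have hcont : ContinuousOn (fun x ↦ hessFrob w x ^ r) (closure V) :=
    ((continuousOn_hessFrob hU hw).mono hVU).rpow_const fun _ _ ↦ Or.inr hr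
  exact (hcont.integrableOn_compact hV.isCompact_closure).mono_set subset_closure

theorem laverage_hessFrob_rpow_le {V : Set (EuclideanSpace ℝ (Fin d))} (hV : IsOpen V)
    (hV_fin : volume V ≠ ∞) (hw : ContDiffOn ℝ 1 w V) (hp : p < 2) (hr₀ : 0 < r) (hr : r < 2) :
    ⨍⁻ x in V, ENNReal.ofReal (hessFrob w x ^ r) ∂volume ≤
      (⨍⁻ x in V, ENNReal.ofReal (hessFrob w x ^ 2) / ENNReal.ofReal (gradFrob w x ^ (2 - p))
          ∂volume) ^ (r / 2) *
        (⨍⁻ x in V, ENNReal.ofReal (gradFrob w x ^ (r * (2 - p) / (2 - r)))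
          ∂volume) ^ ((2 - r) / 2) := by
  have hae : ae ((volume.restrict V univ)⁻¹ • volume.restrict V) = ae (volume.restrict V) :=
    Measure.ae_ennreal_smul_measure_eq (by simpa using hV_fin) _
  have hp₀ : 2 - p ≠ 0 := (sub_pos.2 hp).ne'
  have hgrad : ∀ x, ENNReal.ofReal (gradFrob w x ^ (r * (2 - p) / (2 - r))) =
      ENNReal.ofReal (gradFrob w x ^ (2 - p)) ^ (r / (2 - r)) := fun x ↦ by
    rw [ENNReal.ofReal_rpow_of_nonneg (Real.rpow_nonneg (gradFrob_nonneg w x) _)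
      (div_nonneg hr₀.le (sub_pos.2 hr).le), ← Real.rpow_mul (gradFrob_nonneg w x)]
    ring_nf
  simp only [laverage_eq', hgrad, ENNReal.ofReal_pow (hessFrob_nonneg w _),
    ← ENNReal.rpow_two, ← ENNReal.ofReal_rpow_of_nonneg (hessFrob_nonneg w _) hr₀.le]
  refine lintegral_rpow_le_lintegral_div_rpow_mul_lintegral_rpow
    (measurable_hessFrob w).ennreal_ofReal.aemeasurable
    ((measurable_gradFrob w).pow_const _).ennreal_ofReal.aemeasurable
    (.of_forall fun _ ↦ ENNReal.ofReal_ne_top) (fun hg ↦ ?_) hr₀ hr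
  rw [hae] at hg ⊢
  have hg₀ : gradFrob w =ᵐ[volume.restrict V] 0 := by
    filter_upwards [hg] with x hx
    have hpow : gradFrob w x ^ (2 - p) = 0 :=
      le_antisymm (ENNReal.ofReal_eq_zero.1 hx) (Real.rpow_nonneg (gradFrob_nonneg w x) _)
    exact (Real.rpow_eq_zero (gradFrob_nonneg w x) hp₀).1 hpow
  filter_upwards [hessFrob_ae_eq_zero hV hw hg₀] with x hx
  simp [hx]

theorem setLIntegral_enorm_fwdDiff_fwdDiff_rpow_le_hessFrob (hr : 1 ≤ r) (hh : ‖h‖ ≤ T)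
    (hw : ContDiffOn ℝ 2 w (cube c (R + 4 * T))) :
    ∫⁻ x in cube c R, ‖Δ_[h] (Δ_[h] w) x‖ₑ ^ r ≤
      ENNReal.ofReal (‖h‖ ^ (2 * r)) *
        ∫⁻ x in cube c (R + 4 * T), ENNReal.ofReal (hessFrob w x ^ r) := by
  have hr₀ : 0 ≤ r := zero_le_one.trans hr
  have hpointwise : ∀ y, ‖fderiv ℝ (fderiv ℝ w) y h h‖ₑ ^ r ≤
      ENNReal.ofReal (‖h‖ ^ (2 * r)) * ENNReal.ofReal (hessFrob w y ^ r) := fun y ↦ by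
    rw [← ofReal_norm, ENNReal.ofReal_rpow_of_nonneg (norm_nonneg _) hr₀,
      ← ENNReal.ofReal_mul (by positivity), Real.rpow_mul (norm_nonneg h), Real.rpow_two,
      ← Real.mul_rpow (by positivity) (hessFrob_nonneg w y)]
    gcongr
    exact norm_fderiv_fderiv_apply_le w y h
  have hmid : R + 2 * T + 2 * T = R + 4 * T := by ring
  calc ∫⁻ x in cube c R, ‖Δ_[h] (Δ_[h] w) x‖ₑ ^ r
      ≤ ∫⁻ y in cube c (R + 4 * T), ‖fderiv ℝ (fderiv ℝ w) y h h‖ₑ ^ r :=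
        setLIntegral_enorm_fwdDiff_fwdDiff_rpow_le hr (isOpen_cube c R).measurableSet
          (isOpen_cube c (R + 2 * T)) (isOpen_cube c _)
          (fun _ hx _ hs ↦ add_smul_mem_cube hh hx hs)
          (fun _ hx _ hs ↦ hmid ▸ add_smul_mem_cube hh hx hs) hw
    _ ≤ ∫⁻ y in cube c (R + 4 * T),
          ENNReal.ofReal (‖h‖ ^ (2 * r)) * ENNReal.ofReal (hessFrob w y ^ r) :=
        lintegral_mono hpointwise
    _ = ENNReal.ofReal (‖h‖ ^ (2 * r)) *
          ∫⁻ y in cube c (R + 4 * T), ENNReal.ofReal (hessFrob w y ^ r) :=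
        lintegral_const_mul' _ _ ENNReal.ofReal_ne_top

theorem setIntegral_norm_fwdDiff_fwdDiff_rpow_le (hr : 1 ≤ r) (hh : ‖h‖ ≤ T)
    (hw : ContDiffOn ℝ 2 w (cube c (R + 4 * T)))
    (hint : IntegrableOn (fun x ↦ hessFrob w x ^ r) (cube c (R + 4 * T))) :
    ∫ x in cube c R, ‖Δ_[h] (Δ_[h] w) x‖ ^ r ≤
      ‖h‖ ^ (2 * r) * ∫ x in cube c (R + 4 * T), hessFrob w x ^ r := by
  have hhess : ∀ x, 0 ≤ hessFrob w x ^ r := fun x ↦ Real.rpow_nonneg (hessFrob_nonneg w x) r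
  have hrhs : 0 ≤ ‖h‖ ^ (2 * r) * ∫ x in cube c (R + 4 * T), hessFrob w x ^ r :=
    mul_nonneg (by positivity) (integral_nonneg hhess)
  refine (Real.le_norm_self _).trans <| (norm_integral_le_lintegral_norm _).trans <|
    ENNReal.toReal_le_of_le_ofReal hrhs ?_
  rw [ENNReal.ofReal_mul (by positivity),
    ofReal_integral_eq_lintegral_ofReal hint (.of_forall hhess)]
  simpa [Real.abs_rpow_of_nonneg, ← ENNReal.ofReal_rpow_of_nonneg (norm_nonneg _)
    (zero_le_one.trans hr)] using
    setLIntegral_enorm_fwdDiff_fwdDiff_rpow_le_hessFrob hr hh hw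

theorem setAverage_norm_fwdDiff_fwdDiff_rpow_le (hr : 1 ≤ r) (hh₀ : 0 < ‖h‖) (hhR : ‖h‖ ≤ R)
    (hw : ContDiffOn ℝ 2 w (cube c (5 * R)))
    (hint : IntegrableOn (fun x ↦ hessFrob w x ^ r) (cube c (5 * R))) :
    ‖h‖ ^ (-(2 * r)) * ⨍ x in cube c R, ‖Δ_[h] (Δ_[h] w) x‖ ^ r ≤
      (5 : ℝ) ^ d * ⨍ x in cube c (5 * R), hessFrob w x ^ r := by
  have hR : 0 < R := hh₀.trans_le hhR
  have hvol : ∀ {S : ℝ}, 0 < S → volume.real (cube c S) = S ^ d := fun hS ↦ by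
    simp [measureReal_def, volume_cube, hS.le]
  have hfive : R + 4 * R = 5 * R := by ring
  have hint_le := setIntegral_norm_fwdDiff_fwdDiff_rpow_le (T := R) hr hhR
    (by rwa [hfive]) (by rwa [hfive])
  rw [hfive] at hint_le
  rw [setAverage_eq, setAverage_eq, hvol hR, hvol (by positivity), smul_eq_mul, smul_eq_mul]
  calc ‖h‖ ^ (-(2 * r)) * ((R ^ d)⁻¹ * ∫ x in cube c R, ‖Δ_[h] (Δ_[h] w) x‖ ^ r)
      ≤ ‖h‖ ^ (-(2 * r)) * ((R ^ d)⁻¹ *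
          (‖h‖ ^ (2 * r) * ∫ x in cube c (5 * R), hessFrob w x ^ r)) := by gcongr
    _ = 5 ^ d * (((5 * R) ^ d)⁻¹ * ∫ x in cube c (5 * R), hessFrob w x ^ r) := by
        rw [Real.rpow_neg hh₀.le, mul_pow]
        field_simp

end Main

theorem stmt8_general (d N : ℕ) (p r : ℝ) (hp : p < 2) (hr₁ : 1 ≤ r) (hr : r < 2)
    (cQ : EuclideanSpace ℝ (Fin d)) (R : ℝ)
    (w : EuclideanSpace ℝ (Fin d) → EuclideanSpace ℝ (Fin N))
    (hw : ∃ U, IsOpen U ∧ closure (cube cQ (5 * R)) ⊆ U ∧ ContDiffOn ℝ 2 w U)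
    (h : EuclideanSpace ℝ (Fin d)) (hh0 : 0 < ‖h‖) (hhR : ‖h‖ ≤ R) :
    ‖h‖ ^ (-(2 * r)) * ⨍ x in cube cQ R, ‖w (x + 2 • h) - 2 • w (x + h) + w x‖ ^ r ≤
        (5 : ℝ) ^ d * ⨍ x in cube cQ (5 * R), hessFrob w x ^ r ∧
      ENNReal.ofReal (⨍ x in cube cQ (5 * R), hessFrob w x ^ r) ≤
        (⨍⁻ x in cube cQ (5 * R),
            ENNReal.ofReal (hessFrob w x ^ 2) / ENNReal.ofReal (gradFrob w x ^ (2 - p))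
              ∂volume) ^ (r / 2) *
          (⨍⁻ x in cube cQ (5 * R),
            ENNReal.ofReal (gradFrob w x ^ (r * (2 - p) / (2 - r))) ∂volume) ^ ((2 - r) / 2) := by
  obtain ⟨U, hU, hQU, hwU⟩ := hw
  have hr₀ : 0 < r := one_pos.trans_le hr₁
  have hbdd := isBounded_cube cQ (5 * R)
  have hwQ : ContDiffOn ℝ 2 w (cube cQ (5 * R)) := hwU.mono (subset_closure.trans hQU)
  have hint := integrableOn_hessFrob_rpow hU hwU hbdd hQU hr₀.le
  constructor
  · simpa only [fwdDiff_fwdDiff_apply] using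
      setAverage_norm_fwdDiff_fwdDiff_rpow_le hr₁ hh0 hhR hwQ hint
  · rw [ofReal_setAverage hint (.of_forall fun x ↦ Real.rpow_nonneg (hessFrob_nonneg w x) r),
      ← setLAverage_eq]
    exact laverage_hessFrob_rpow_le (isOpen_cube _ _) hbdd.measure_lt_top.ne
      (hwQ.of_le one_le_two) hp hr₀ hr

/-- Second difference quotients of a `C²` map `w` are controlled by second
derivatives, and the `L^r` norm of `∇²w` is estimated by interpolation:
`⨍_{5Q}|∇²w|^r ≤ (⨍_{5Q}|∇w|^{p−2}|∇²w|²)^{r/2} (⨍_{5Q}|∇w|^{r(2−p)/(2−r)})^{(2−r)/2}`,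
the integral `⨍_{5Q}|∇w|^{p−2}|∇²w|²` being interpreted in `[0,∞]` (it equals
`|∇²w|²/|∇w|^{2−p}` with the conventions `0/0 = 0`, `a/0 = ∞` for `a ≠ 0`). -/
theorem stmt8 (d N : ℕ) (p r : ℝ) (hp : 1 < p) (hpr : p ≤ r) (hr : r < 2)
    (cQ : EuclideanSpace ℝ (Fin d)) (R : ℝ) (hR : 0 < R)
    (w : EuclideanSpace ℝ (Fin d) → EuclideanSpace ℝ (Fin N))
    (hw : ∃ U, IsOpen U ∧ closure (cube cQ (5 * R)) ⊆ U ∧ ContDiffOn ℝ 2 w U)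
    (h : EuclideanSpace ℝ (Fin d)) (hh0 : 0 < ‖h‖) (hhR : ‖h‖ ≤ R) :
    ‖h‖ ^ (-(2 * r)) * ⨍ x in cube cQ R, ‖w (x + 2 • h) - 2 • w (x + h) + w x‖ ^ r ≤
        (5 : ℝ) ^ d * ⨍ x in cube cQ (5 * R), hessFrob w x ^ r ∧
      ENNReal.ofReal (⨍ x in cube cQ (5 * R), hessFrob w x ^ r) ≤
        (⨍⁻ x in cube cQ (5 * R),
            ENNReal.ofReal (hessFrob w x ^ 2) / ENNReal.ofReal (gradFrob w x ^ (2 - p))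
              ∂volume) ^ (r / 2) *
          (⨍⁻ x in cube cQ (5 * R),
            ENNReal.ofReal (gradFrob w x ^ (r * (2 - p) / (2 - r))) ∂volume) ^ ((2 - r) / 2) :=
  stmt8_general d N p r (hpr.trans_lt hr) (hp.le.trans hpr) hr cQ R w hw h hh0 hhR
end
end

section
/- Let n ∈ ℕ, p > 1, α₀, α₁ > 0, and let F : ℝ^n → ℝ be continuously differentiable on ℝ^n and twice continuously differentiable on ℝ^n∖{0}, with α₀|η|^{p−2}|ξ|² ≤ D²F(η)[ξ,ξ] ≤ α₁|η|^{p−2}|ξ|² for all η ≠ 0 and all ξ ∈ ℝ^n. Then there exists c > 0, depending only on p, α₀ and α₁, such that (∇F(η) − ∇F(ξ))·(η − ξ) ≥ c|V(η) − V(ξ)|² for all η, ξ ∈ ℝ^n, where V(η) := |η|^{(p−2)/2}η (V(0) := 0). -/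
open scoped RealInnerProductSpace

noncomputable section

/-- `V(η) = |η|^{(p-2)/2} η` (so that `V(0) = 0`). -/
def Vm (p : ℝ) {n : ℕ} (η : EuclideanSpace ℝ (Fin n)) : EuclideanSpace ℝ (Fin n) :=
  ‖η‖ ^ ((p - 2) / 2) • η

/-!
Let `A` be a dual-valued field and `V` a map with `‖DV(x) w‖² ≤ C (DA(x) w)(w)` away from one point.
Put `w = y - x` and `e = V y - V x`. Along the segment `γ` from `x` to `y`, the function
`φ(t) = C A(γ t) w + ‖e‖² t - 2 ⟪V (γ t), e⟫` has derivative at least `‖DV(γ t) w - e‖² ≥ 0`, and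
`φ(0) ≤ φ(1)` reads `‖e‖² ≤ C (A y - A x) w`. The exceptional point is met at most once by the
segment, and there continuity of `φ` suffices.

For `V x = ‖x‖^s x` one has `‖DV(x)‖ ≤ (|s| + 1) ‖x‖^s`; with `A = DF` and `2 s = p - 2`, the
lower Hessian bound is then the hypothesis on `A` and `V`, with `C = (|s| + 1)² / α₀`.
-/

open AffineMap (lineMap)

theorem monotone_of_hasDerivAt_nonneg_of_ne {f f' : ℝ → ℝ} {a : ℝ} (hf : Continuous f)
    (hff' : ∀ t ≠ a, HasDerivAt f (f' t) t) (hf' : ∀ t ≠ a, 0 ≤ f' t) : Monotone f := by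
  refine MonotoneOn.Iic_union_Ici (a := a) ?_ ?_
  · refine monotoneOn_of_hasDerivWithinAt_nonneg (f' := f') (convex_Iic a) hf.continuousOn ?_ ?_ <;>
      rw [interior_Iic]
    · exact fun t ht ↦ (hff' t ht.ne).hasDerivWithinAt
    · exact fun t ht ↦ hf' t ht.ne
  · refine monotoneOn_of_hasDerivWithinAt_nonneg (f' := f') (convex_Ici a) hf.continuousOn ?_ ?_ <;>
      rw [interior_Ici]
    · exact fun t ht ↦ (hff' t ht.ne').hasDerivWithinAt
    · exact fun t ht ↦ hf' t ht.ne'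

theorem exists_forall_ne_lineMap_ne (k : Type*) {V P : Type*} [Ring k] [IsDomain k]
    [AddCommGroup V] [Module k V] [Module.IsTorsionFree k V] [AddTorsor V P] {x y : P}
    (hxy : x ≠ y) (z : P) : ∃ t₀ : k, ∀ t ≠ t₀, lineMap x y t ≠ z := by
  by_cases hz : ∃ t₀ : k, lineMap x y t₀ = z
  · obtain ⟨t₀, rfl⟩ := hz
    exact ⟨t₀, fun t ht ↦ (AffineMap.lineMap_injective k hxy).ne ht⟩
  · exact ⟨0, fun t _ ht ↦ hz ⟨t, ht⟩⟩

section Comparison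

variable {E G : Type*} [NormedAddCommGroup E] [NormedSpace ℝ E]
  [NormedAddCommGroup G] [InnerProductSpace ℝ G]

theorem norm_sub_sq_le_of_norm_fderiv_sq_le
    {A : E → StrongDual ℝ E} {A' : E → E →L[ℝ] StrongDual ℝ E}
    {V : E → G} {V' : E → E →L[ℝ] G} {z : E} {C : ℝ} (hA : Continuous A) (hV : Continuous V)
    (hA' : ∀ x ≠ z, HasFDerivAt A (A' x) x) (hV' : ∀ x ≠ z, HasFDerivAt V (V' x) x)
    (hVA : ∀ x ≠ z, ∀ w, ‖V' x w‖ ^ 2 ≤ C * A' x w w) (x y : E) :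
    ‖V y - V x‖ ^ 2 ≤ C * (A y - A x) (y - x) := by
  rcases eq_or_ne x y with rfl | hxy
  · simp
  set w := y - x
  set e := V y - V x with he
  let γ : ℝ → E := lineMap x y
  have hγ : Continuous γ := AffineMap.lineMap_continuous
  let φ : ℝ → ℝ := fun t ↦ C * A (γ t) w + ‖e‖ ^ 2 * t - 2 * ⟪V (γ t), e⟫
  let φ' : ℝ → ℝ := fun t ↦ C * A' (γ t) w w + ‖e‖ ^ 2 - 2 * ⟪V' (γ t) w, e⟫
  obtain ⟨t₀, hγz⟩ := exists_forall_ne_lineMap_ne ℝ hxy z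
  have φ_continuous : Continuous φ := by fun_prop
  have φ_hasDerivAt (t : ℝ) (ht : t ≠ t₀) : HasDerivAt φ (φ' t) t := by
    have hγ' : HasDerivAt γ w t := AffineMap.hasDerivAt_lineMap
    have hAγ : HasDerivAt (fun t ↦ A (γ t) w) (A' (γ t) w w) t := by
      simpa using ((hA' _ (hγz t ht)).comp_hasDerivAt t hγ').clm_apply (hasDerivAt_const t w)
    have hVγ : HasDerivAt (fun t ↦ ⟪V (γ t), e⟫) ⟪V' (γ t) w, e⟫ t := by
      simpa using ((hV' _ (hγz t ht)).comp_hasDerivAt t hγ').inner ℝ (hasDerivAt_const t e)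
    simpa using ((hAγ.const_mul C).fun_add ((hasDerivAt_id' t).const_mul (‖e‖ ^ 2))).fun_sub
      (hVγ.const_mul 2)
  have φ'_nonneg (t : ℝ) (ht : t ≠ t₀) : 0 ≤ φ' t := calc
    0 ≤ ‖V' (γ t) w - e‖ ^ 2 := sq_nonneg _
    _ = ‖V' (γ t) w‖ ^ 2 + ‖e‖ ^ 2 - 2 * ⟪V' (γ t) w, e⟫ := by rw [norm_sub_sq_real]; ring
    _ ≤ φ' t := by
      simp only [φ']
      gcongr
      exact hVA _ (hγz t ht) w
  have φ_zero_le_one : φ 0 ≤ φ 1 :=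
    monotone_of_hasDerivAt_nonneg_of_ne φ_continuous φ_hasDerivAt φ'_nonneg zero_le_one
  have inner_sub_eq : ⟪V y, e⟫ - ⟪V x, e⟫ = ‖e‖ ^ 2 := by
    rw [← inner_sub_left, ← he, real_inner_self_eq_norm_sq]
  simp only [φ, γ, AffineMap.lineMap_apply_zero, AffineMap.lineMap_apply_one] at φ_zero_le_one
  rw [sub_apply]
  linarith

end Comparison

section NormRpowSMul

/-- The radial power map `x ↦ ‖x‖ ^ s • x`. For `s = (p - 2) / 2` on Euclidean space it is `Vm p`.
At the origin its value is `0` for every `s`, whatever the value of `0 ^ s`. -/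
def normRpowSMul {E : Type*} [NormedAddCommGroup E] [NormedSpace ℝ E] (s : ℝ) (x : E) : E :=
  ‖x‖ ^ s • x

section Normed

variable {E : Type*} [NormedAddCommGroup E] [NormedSpace ℝ E]

theorem norm_normRpowSMul {s : ℝ} (hs : -1 < s) (x : E) :
    ‖normRpowSMul s x‖ = ‖x‖ ^ (s + 1) := by
  rw [normRpowSMul, norm_smul, Real.norm_of_nonneg (by positivity),
    Real.rpow_add_one' (norm_nonneg x) (by linarith)]

theorem continuous_normRpowSMul {s : ℝ} (hs : -1 < s) :
    Continuous (normRpowSMul s : E → E) := by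
  refine continuous_iff_continuousAt.2 fun x ↦ ?_
  rcases eq_or_ne x 0 with rfl | hx
  · have hnorm : Continuous fun x : E ↦ ‖x‖ ^ (s + 1) :=
      continuous_norm.rpow_const fun _ ↦ .inr (by linarith)
    have hzero : normRpowSMul s (0 : E) = 0 := smul_zero _
    rw [ContinuousAt, hzero, tendsto_zero_iff_norm_tendsto_zero]
    simpa [norm_normRpowSMul hs, Real.zero_rpow (show s + 1 ≠ 0 by linarith)] using hnorm.tendsto 0
  · exact (continuousAt_id.norm.rpow_const (.inl (norm_ne_zero_iff.2 hx))).smul continuousAt_id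

end Normed

variable {E : Type*} [NormedAddCommGroup E] [InnerProductSpace ℝ E]

theorem hasFDerivAt_norm_rpow_of_ne_zero {x : E} (hx : x ≠ 0) (s : ℝ) :
    HasFDerivAt (fun x : E ↦ ‖x‖ ^ s) ((s * ‖x‖ ^ (s - 2)) • innerSL ℝ x) x := by
  have norm_sq_rpow (r : ℝ) (y : E) : (‖y‖ ^ 2) ^ r = ‖y‖ ^ (2 * r) := by
    simpa using (Real.rpow_natCast_mul (norm_nonneg y) 2 r).symm
  have h := (hasStrictFDerivAt_norm_sq x).hasFDerivAt.rpow_const (p := s / 2) (.inl (by simpa))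
  simp only [norm_sq_rpow] at h
  convert h using 1
  · ext y
    ring_nf
  · ext w
    simp only [smul_apply, smul_eq_mul, nsmul_eq_mul, Nat.cast_ofNat]
    ring_nf

theorem differentiableAt_normRpowSMul (s : ℝ) {x : E} (hx : x ≠ 0) :
    DifferentiableAt ℝ (normRpowSMul s) x :=
  (hasFDerivAt_norm_rpow_of_ne_zero hx s).differentiableAt.fun_smul differentiableAt_id

theorem fderiv_normRpowSMul_apply (s : ℝ) {x : E} (hx : x ≠ 0) (w : E) :
    fderiv ℝ (normRpowSMul s) x w = ‖x‖ ^ s • w + (s * ‖x‖ ^ (s - 2) * ⟪x, w⟫) • x := by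
  have h : HasFDerivAt (normRpowSMul s) _ x :=
    (hasFDerivAt_norm_rpow_of_ne_zero hx s).fun_smul (hasFDerivAt_id x)
  simp [h.fderiv]

theorem norm_fderiv_normRpowSMul_apply_le (s : ℝ) {x : E} (hx : x ≠ 0) (w : E) :
    ‖fderiv ℝ (normRpowSMul s) x w‖ ≤ (|s| + 1) * ‖x‖ ^ s * ‖w‖ := by
  have hpow : ‖x‖ ^ (s - 2) * ‖x‖ ^ 2 = ‖x‖ ^ s := by
    rw [← Real.rpow_add_natCast (norm_ne_zero_iff.2 hx)]
    norm_num
  calc ‖fderiv ℝ (normRpowSMul s) x w‖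
      ≤ ‖‖x‖ ^ s • w‖ + ‖(s * ‖x‖ ^ (s - 2) * ⟪x, w⟫) • x‖ := by
        rw [fderiv_normRpowSMul_apply s hx]
        exact norm_add_le _ _
    _ = ‖x‖ ^ s * ‖w‖ + |s| * ‖x‖ ^ (s - 2) * |⟪x, w⟫| * ‖x‖ := by
        simp only [norm_smul, norm_mul, Real.norm_eq_abs, Real.abs_rpow_of_nonneg (norm_nonneg x),
          abs_norm]
    _ ≤ ‖x‖ ^ s * ‖w‖ + |s| * ‖x‖ ^ (s - 2) * (‖x‖ * ‖w‖) * ‖x‖ := by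
        gcongr
        exact abs_real_inner_le_norm x w
    _ = (|s| + 1) * ‖x‖ ^ s * ‖w‖ := by rw [← hpow]; ring

theorem mul_norm_normRpowSMul_sub_sq_le {s α : ℝ} (hs : -1 < s) (hα : 0 < α)
    {A : E → StrongDual ℝ E} {A' : E → E →L[ℝ] StrongDual ℝ E} (hA : Continuous A)
    (hA' : ∀ x ≠ 0, HasFDerivAt A (A' x) x)
    (hcoercive : ∀ x ≠ 0, ∀ w, α * ‖x‖ ^ (2 * s) * ‖w‖ ^ 2 ≤ A' x w w) (x y : E) :
    α / (|s| + 1) ^ 2 * ‖normRpowSMul s y - normRpowSMul s x‖ ^ 2 ≤ (A y - A x) (y - x) := by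
  have hfderiv_sq (x : E) (hx : x ≠ 0) (w : E) :
      ‖fderiv ℝ (normRpowSMul s) x w‖ ^ 2 ≤ (|s| + 1) ^ 2 / α * A' x w w := calc
    _ ≤ ((|s| + 1) * ‖x‖ ^ s * ‖w‖) ^ 2 := by
        gcongr
        exact norm_fderiv_normRpowSMul_apply_le s hx w
    _ = (|s| + 1) ^ 2 / α * (α * ‖x‖ ^ (2 * s) * ‖w‖ ^ 2) := by
        have hpow : ‖x‖ ^ (2 * s) = (‖x‖ ^ s) ^ 2 := by
          simpa [mul_comm] using Real.rpow_mul_natCast (norm_nonneg x) s 2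
        rw [hpow]
        field_simp
    _ ≤ _ := by
        gcongr
        exact hcoercive x hx w
  have hcompare := norm_sub_sq_le_of_norm_fderiv_sq_le hA (continuous_normRpowSMul hs) hA'
    (fun x hx ↦ (differentiableAt_normRpowSMul s hx).hasFDerivAt) hfderiv_sq x y
  calc _ ≤ α / (|s| + 1) ^ 2 * ((|s| + 1) ^ 2 / α * (A y - A x) (y - x)) := by gcongr
    _ = _ := by field_simp

end NormRpowSMul

theorem stmt14_general {E : Type*} [NormedAddCommGroup E] [InnerProductSpace ℝ E] [CompleteSpace E]
    {p α₀ : ℝ} (hp : 0 < p) (hα₀ : 0 < α₀) {F : E → ℝ} (hF : ContDiff ℝ 1 F)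
    (hF₂ : ContDiffOn ℝ 2 F {0}ᶜ)
    (hHess : ∀ η ≠ 0, ∀ ξ, α₀ * ‖η‖ ^ (p - 2) * ‖ξ‖ ^ 2 ≤ iteratedFDeriv ℝ 2 F η ![ξ, ξ])
    (η ξ : E) :
    α₀ / (|(p - 2) / 2| + 1) ^ 2 *
        ‖normRpowSMul ((p - 2) / 2) η - normRpowSMul ((p - 2) / 2) ξ‖ ^ 2 ≤
      ⟪gradient F η - gradient F ξ, η - ξ⟫ := by
  have hfderiv (x : E) (hx : x ≠ 0) : HasFDerivAt (fderiv ℝ F) (fderiv ℝ (fderiv ℝ F) x) x := by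
    have hFx : ContDiffAt ℝ 2 F x := hF₂.contDiffAt (isOpen_compl_singleton.mem_nhds hx)
    exact ((hFx.fderiv_right (m := 1) (by norm_num)).differentiableAt (by simp)).hasFDerivAt
  have hcoercive (x : E) (hx : x ≠ 0) (w : E) :
      α₀ * ‖x‖ ^ (2 * ((p - 2) / 2)) * ‖w‖ ^ 2 ≤ fderiv ℝ (fderiv ℝ F) x w w := by
    simpa [iteratedFDeriv_two_apply, mul_div_cancel₀] using hHess x hx w
  simpa only [inner_sub_left, inner_gradient_left, sub_apply] using
    mul_norm_normRpowSMul_sub_sq_le (by linarith) hα₀ (hF.continuous_fderiv one_ne_zero) hfderiv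
      hcoercive ξ η

/-- Strong monotonicity of the gradient of a `C¹` potential, `C²` away from
the origin, with `p`-uniform Hessian bounds: `(∇F(η)-∇F(ξ))·(η-ξ) ≥ c|V(η)-V(ξ)|²`, the
constant `c` depending only on `p, α₀, α₁`. -/
theorem stmt14 (p α₀ α₁ : ℝ) (hp : 1 < p) (hα₀ : 0 < α₀) (hα₁ : 0 < α₁) :
    ∃ c : ℝ, 0 < c ∧
      ∀ (n : ℕ) (F : EuclideanSpace ℝ (Fin n) → ℝ),
        ContDiff ℝ 1 F →
        ContDiffOn ℝ 2 F {0}ᶜ →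
        (∀ η : EuclideanSpace ℝ (Fin n), η ≠ 0 → ∀ ξ,
          α₀ * ‖η‖ ^ (p - 2) * ‖ξ‖ ^ 2 ≤ iteratedFDeriv ℝ 2 F η ![ξ, ξ] ∧
          iteratedFDeriv ℝ 2 F η ![ξ, ξ] ≤ α₁ * ‖η‖ ^ (p - 2) * ‖ξ‖ ^ 2) →
        ∀ η ξ : EuclideanSpace ℝ (Fin n),
          c * ‖Vm p η - Vm p ξ‖ ^ 2 ≤ ⟪gradient F η - gradient F ξ, η - ξ⟫ :=
  ⟨α₀ / (|(p - 2) / 2| + 1) ^ 2, by positivity, fun _ _ hF hF₂ hHess ↦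
    stmt14_general (by linarith) hα₀ hF hF₂ fun η hη ξ ↦ (hHess η hη ξ).1⟩
end
end

section
/- For every p > 1 and n ∈ ℕ there exist constants c, C > 0, depending only on p, such that for all A, B ∈ ℝ^n with (A,B) ≠ (0,0): c|V(A) − V(B)|² ≤ (|A| + |B|)^{p−2}|A − B|² ≤ C|V(A) − V(B)|², where V(η) := |η|^{(p−2)/2}η (V(0) := 0). -/
noncomputable section

/-!
Write `q = p / 2`, so that `V(η) = |η| ^ (q - 1) η` and `|V(η)| = |η| ^ q`. If `|B| ≤ |A|`, then
`V(A) - V(B) = |A| ^ (q - 1) (A - B) + (|A| ^ (q - 1) - |B| ^ (q - 1)) B`, and Bernoulli's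
inequality bounds the second summand by a multiple of `|A| ^ (q - 1) (|A| - |B|)`; hence
`|V(A) - V(B)| ≲ |A| ^ (q - 1) |A - B|`. The inverse of `V` is the map of the same kind with
exponent `1 / q`, and the same estimate applied to it is the reverse inequality. Only the triangle
inequality enters, so the argument works in every normed space.
-/

theorem rpow_le_rpow_abs_mul_rpow {a b k : ℝ} (ha : 0 < a) (hb : 0 < b) (hab : a ≤ k * b)
    (hba : b ≤ k * a) (t : ℝ) : a ^ t ≤ k ^ |t| * b ^ t := by
  have hk : 0 < k := pos_of_mul_pos_left (ha.trans_le hab) hb.le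
  rcases le_total 0 t with ht | ht
  · calc a ^ t ≤ (k * b) ^ t := Real.rpow_le_rpow ha.le hab ht
      _ = k ^ |t| * b ^ t := by rw [Real.mul_rpow hk.le hb.le, abs_of_nonneg ht]
  · have hbk : k⁻¹ * b ≤ a := (inv_mul_le_iff₀ hk).2 hba
    calc a ^ t ≤ (k⁻¹ * b) ^ t := Real.rpow_le_rpow_of_nonpos (by positivity) hbk ht
      _ = k ^ |t| * b ^ t := by
        rw [Real.mul_rpow (by positivity) hb.le, Real.inv_rpow hk.le, ← Real.rpow_neg hk.le,
          abs_of_nonpos ht]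

theorem rpow_sub_one_mul_self {a q : ℝ} (ha : 0 ≤ a) (hq : q ≠ 0) : a ^ (q - 1) * a = a ^ q := by
  rw [← Real.rpow_add_one' ha (by rwa [sub_add_cancel]), sub_add_cancel]

theorem one_sub_rpow_le_max_mul {r q : ℝ} (hr₀ : 0 ≤ r) (hr₁ : r ≤ 1) (hq : 0 ≤ q) :
    1 - r ^ q ≤ max 1 q * (1 - r) := by
  rcases le_total 1 q with h | h
  · have bernoulli : 1 + q * (r - 1) ≤ r ^ q := by
      simpa only [add_sub_cancel] using
        one_add_mul_self_le_rpow_one_add (s := r - 1) (by linarith) h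
    rw [max_eq_right h]
    linarith
  · have r_le : r ≤ r ^ q := by
      simpa only [Real.rpow_one] using Real.rpow_le_rpow_of_exponent_ge' hr₀ hr₁ hq h
    rw [max_eq_left h]
    linarith

theorem rpow_sub_rpow_le_max_mul {a b q : ℝ} (ha : 0 < a) (hb : 0 ≤ b) (hba : b ≤ a)
    (hq : 0 ≤ q) : a ^ q - b ^ q ≤ max 1 q * (a ^ (q - 1) * (a - b)) := by
  calc a ^ q - b ^ q = a ^ q * (1 - (b / a) ^ q) := by
        rw [Real.div_rpow hb ha.le]
        field_simp
    _ ≤ a ^ q * (max 1 q * (1 - b / a)) := by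
        gcongr
        exact one_sub_rpow_le_max_mul (by positivity) (div_le_one_of_le₀ hba ha.le) hq
    _ = max 1 q * (a ^ (q - 1) * (a - b)) := by
        rw [Real.rpow_sub_one ha.ne']
        field_simp

theorem abs_rpow_sub_rpow_mul_le {a b q : ℝ} (ha : 0 < a) (hb : 0 ≤ b) (hba : b ≤ a)
    (hq : 0 < q) :
    |a ^ (q - 1) - b ^ (q - 1)| * b ≤ (1 + max 1 q) * (a ^ (q - 1) * (a - b)) := by
  have rpow_diff_nonneg : 0 ≤ a ^ q - b ^ q := sub_nonneg.2 (Real.rpow_le_rpow hb hba hq.le)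
  have linear_diff_nonneg : 0 ≤ a ^ (q - 1) * (a - b) :=
    mul_nonneg (by positivity) (sub_nonneg.2 hba)
  calc |a ^ (q - 1) - b ^ (q - 1)| * b = |(a ^ (q - 1) - b ^ (q - 1)) * b| := by
        rw [abs_mul, abs_of_nonneg hb]
    _ = |(a ^ q - b ^ q) - a ^ (q - 1) * (a - b)| := by
        rw [← rpow_sub_one_mul_self ha.le hq.ne', ← rpow_sub_one_mul_self hb hq.ne']
        ring_nf
    _ ≤ (a ^ q - b ^ q) + a ^ (q - 1) * (a - b) := by
        simpa only [abs_of_nonneg rpow_diff_nonneg, abs_of_nonneg linear_diff_nonneg] using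
          abs_sub (a ^ q - b ^ q) (a ^ (q - 1) * (a - b))
    _ ≤ (1 + max 1 q) * (a ^ (q - 1) * (a - b)) := by
        linarith [rpow_sub_rpow_le_max_mul ha hb hba hq.le]

section

variable {E : Type*} [NormedAddCommGroup E] [NormedSpace ℝ E]

/-- The radial power map `x ↦ ‖x‖ ^ (q - 1) • x`, which preserves directions and raises norms to the
power `q`. The paper's `V` is the case `q = p / 2`; indexing by the power of the norm makes
composition multiply the exponents. -/
def radialPow (q : ℝ) (x : E) : E :=
  ‖x‖ ^ (q - 1) • x

theorem Vm_eq_radialPow (p : ℝ) {n : ℕ} (η : EuclideanSpace ℝ (Fin n)) :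
    Vm p η = radialPow (p / 2) η := by
  rw [Vm, radialPow, sub_div, div_self two_ne_zero]

theorem radialPow_one (x : E) : radialPow 1 x = x := by
  simp [radialPow]

theorem norm_radialPow {q : ℝ} (hq : q ≠ 0) (x : E) : ‖radialPow q x‖ = ‖x‖ ^ q := by
  rw [radialPow, norm_smul, Real.norm_of_nonneg (by positivity),
    rpow_sub_one_mul_self (norm_nonneg x) hq]

theorem radialPow_radialPow {q : ℝ} (hq : q ≠ 0) (r : ℝ) (x : E) :
    radialPow r (radialPow q x) = radialPow (r * q) x := by
  rcases eq_or_ne x 0 with rfl | hx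
  · simp [radialPow]
  · have hx_norm : 0 < ‖x‖ := norm_pos_iff.2 hx
    rw [radialPow, norm_radialPow hq, radialPow, radialPow, smul_smul, ← Real.rpow_mul hx_norm.le,
      ← Real.rpow_add hx_norm]
    ring_nf

theorem radialPow_inv_radialPow {q : ℝ} (hq : q ≠ 0) (x : E) :
    radialPow q⁻¹ (radialPow q x) = x := by
  rw [radialPow_radialPow hq, inv_mul_cancel₀ hq, radialPow_one]

theorem norm_radialPow_sub_le_of_norm_le {q : ℝ} (hq : 0 < q) {x y : E} (hx : 0 < ‖x‖)
    (hyx : ‖y‖ ≤ ‖x‖) :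
    ‖radialPow q x - radialPow q y‖ ≤ (2 + max 1 q) * (‖x‖ ^ (q - 1) * ‖x - y‖) := by
  have decomposition : radialPow q x - radialPow q y =
      ‖x‖ ^ (q - 1) • (x - y) + (‖x‖ ^ (q - 1) - ‖y‖ ^ (q - 1)) • y := by
    rw [radialPow, radialPow]
    module
  calc ‖radialPow q x - radialPow q y‖
      ≤ ‖x‖ ^ (q - 1) * ‖x - y‖ + |‖x‖ ^ (q - 1) - ‖y‖ ^ (q - 1)| * ‖y‖ := by
        rw [decomposition]
        refine (norm_add_le _ _).trans_eq ?_
        rw [norm_smul, norm_smul, Real.norm_of_nonneg (by positivity), Real.norm_eq_abs]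
    _ ≤ ‖x‖ ^ (q - 1) * ‖x - y‖ + (1 + max 1 q) * (‖x‖ ^ (q - 1) * ‖x - y‖) := by
        refine add_le_add_right
          ((abs_rpow_sub_rpow_mul_le hx (norm_nonneg y) hyx hq).trans ?_) _
        gcongr
        exact norm_sub_norm_le x y
    _ = (2 + max 1 q) * (‖x‖ ^ (q - 1) * ‖x - y‖) := by ring

theorem norm_radialPow_sub_le_max_rpow_mul {q : ℝ} (hq : 0 < q) {x y : E} (hxy : 0 < max ‖x‖ ‖y‖) :
    ‖radialPow q x - radialPow q y‖ ≤
      (2 + max 1 q) * (max ‖x‖ ‖y‖ ^ (q - 1) * ‖x - y‖) := by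
  wlog hyx : ‖y‖ ≤ ‖x‖ generalizing x y
  · rw [norm_sub_rev, max_comm ‖x‖, norm_sub_rev x]
    exact this (by rwa [max_comm]) (le_of_not_ge hyx)
  rw [max_eq_left hyx] at hxy ⊢
  exact norm_radialPow_sub_le_of_norm_le hq hxy hyx

theorem max_rpow_mul_norm_sub_le_radialPow {q : ℝ} (hq : 0 < q) {x y : E} (hxy : 0 < max ‖x‖ ‖y‖) :
    max ‖x‖ ‖y‖ ^ (q - 1) * ‖x - y‖ ≤
      (2 + max 1 q⁻¹) * ‖radialPow q x - radialPow q y‖ := by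
  set m := max ‖x‖ ‖y‖
  have max_norm : max ‖radialPow q x‖ ‖radialPow q y‖ = m ^ q := by
    rw [norm_radialPow hq.ne', norm_radialPow hq.ne']
    exact ((Real.monotoneOn_rpow_Ici_of_exponent_nonneg hq.le).map_max
      (norm_nonneg x) (norm_nonneg y)).symm
  have inverse_bound : ‖x - y‖ ≤
      (2 + max 1 q⁻¹) * (m ^ (1 - q) * ‖radialPow q x - radialPow q y‖) := by
    have h := norm_radialPow_sub_le_max_rpow_mul (inv_pos.2 hq)
      (x := radialPow q x) (y := radialPow q y) (by rw [max_norm]; positivity)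
    rwa [radialPow_inv_radialPow hq.ne', radialPow_inv_radialPow hq.ne', max_norm,
      ← Real.rpow_mul hxy.le, mul_sub, mul_inv_cancel₀ hq.ne', mul_one] at h
  have cancel : m ^ (q - 1) * m ^ (1 - q) = 1 := by
    rw [← Real.rpow_add hxy, sub_add_sub_cancel, sub_self, Real.rpow_zero]
  calc m ^ (q - 1) * ‖x - y‖
      ≤ m ^ (q - 1) *
          ((2 + max 1 q⁻¹) * (m ^ (1 - q) * ‖radialPow q x - radialPow q y‖)) := by gcongr
    _ = (m ^ (q - 1) * m ^ (1 - q)) *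
          ((2 + max 1 q⁻¹) * ‖radialPow q x - radialPow q y‖) := by ring
    _ = (2 + max 1 q⁻¹) * ‖radialPow q x - radialPow q y‖ := by rw [cancel, one_mul]

theorem norm_radialPow_sub_le {q : ℝ} (hq : 0 < q) {x y : E} (hxy : 0 < max ‖x‖ ‖y‖) :
    ‖radialPow q x - radialPow q y‖ ≤
      (2 + max 1 q) * 2 ^ |q - 1| * ((‖x‖ + ‖y‖) ^ (q - 1) * ‖x - y‖) := by
  have max_le_add : max ‖x‖ ‖y‖ ≤ ‖x‖ + ‖y‖ := max_le_add_of_nonneg (norm_nonneg x) (norm_nonneg y)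
  have max_rpow_le : max ‖x‖ ‖y‖ ^ (q - 1) ≤ 2 ^ |q - 1| * (‖x‖ + ‖y‖) ^ (q - 1) :=
    rpow_le_rpow_abs_mul_rpow hxy (hxy.trans_le max_le_add) (by linarith)
      (by linarith [le_max_left ‖x‖ ‖y‖, le_max_right ‖x‖ ‖y‖]) _
  calc ‖radialPow q x - radialPow q y‖
      ≤ (2 + max 1 q) * (max ‖x‖ ‖y‖ ^ (q - 1) * ‖x - y‖) :=
        norm_radialPow_sub_le_max_rpow_mul hq hxy
    _ ≤ (2 + max 1 q) * (2 ^ |q - 1| * (‖x‖ + ‖y‖) ^ (q - 1) * ‖x - y‖) := by gcongr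
    _ = (2 + max 1 q) * 2 ^ |q - 1| * ((‖x‖ + ‖y‖) ^ (q - 1) * ‖x - y‖) := by ring

theorem add_rpow_mul_norm_sub_le_radialPow {q : ℝ} (hq : 0 < q) {x y : E} (hxy : 0 < max ‖x‖ ‖y‖) :
    (‖x‖ + ‖y‖) ^ (q - 1) * ‖x - y‖ ≤
      2 ^ |q - 1| * (2 + max 1 q⁻¹) * ‖radialPow q x - radialPow q y‖ := by
  have max_le_add : max ‖x‖ ‖y‖ ≤ ‖x‖ + ‖y‖ := max_le_add_of_nonneg (norm_nonneg x) (norm_nonneg y)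
  have add_rpow_le : (‖x‖ + ‖y‖) ^ (q - 1) ≤ 2 ^ |q - 1| * max ‖x‖ ‖y‖ ^ (q - 1) :=
    rpow_le_rpow_abs_mul_rpow (hxy.trans_le max_le_add) hxy
      (by linarith [le_max_left ‖x‖ ‖y‖, le_max_right ‖x‖ ‖y‖]) (by linarith) _
  calc (‖x‖ + ‖y‖) ^ (q - 1) * ‖x - y‖
      ≤ 2 ^ |q - 1| * max ‖x‖ ‖y‖ ^ (q - 1) * ‖x - y‖ := by gcongr
    _ = 2 ^ |q - 1| * (max ‖x‖ ‖y‖ ^ (q - 1) * ‖x - y‖) := by ring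
    _ ≤ 2 ^ |q - 1| * ((2 + max 1 q⁻¹) * ‖radialPow q x - radialPow q y‖) :=
        mul_le_mul_of_nonneg_left (max_rpow_mul_norm_sub_le_radialPow hq hxy) (by positivity)
    _ = 2 ^ |q - 1| * (2 + max 1 q⁻¹) * ‖radialPow q x - radialPow q y‖ := by ring

end

theorem stmt15_general (p : ℝ) (hp : 0 < p) :
    ∃ c C : ℝ, 0 < c ∧ 0 < C ∧
      ∀ (E : Type*) [NormedAddCommGroup E] [NormedSpace ℝ E] (A B : E), (A, B) ≠ (0, 0) →
        c * ‖radialPow (p / 2) A - radialPow (p / 2) B‖ ^ 2 ≤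
          (‖A‖ + ‖B‖) ^ (p - 2) * ‖A - B‖ ^ 2 ∧
        (‖A‖ + ‖B‖) ^ (p - 2) * ‖A - B‖ ^ 2 ≤
          C * ‖radialPow (p / 2) A - radialPow (p / 2) B‖ ^ 2 := by
  have hq : 0 < p / 2 := half_pos hp
  set q := p / 2 with hq_def
  set K := (2 + max 1 q) * 2 ^ |q - 1|
  set L := 2 ^ |q - 1| * (2 + max 1 q⁻¹)
  have hK : 0 < K := by positivity
  have hL : 0 < L := by positivity
  refine ⟨(K ^ 2)⁻¹, L ^ 2, inv_pos.2 (pow_pos hK 2), pow_pos hL 2, fun E _ _ A B hAB ↦ ?_⟩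
  have hmax : 0 < max ‖A‖ ‖B‖ := by
    simpa only [lt_max_iff, norm_pos_iff, ne_eq, Prod.mk.injEq, not_and_or] using hAB
  have square : (‖A‖ + ‖B‖) ^ (p - 2) * ‖A - B‖ ^ 2 =
      ((‖A‖ + ‖B‖) ^ (q - 1) * ‖A - B‖) ^ 2 := by
    rw [mul_pow, ← Real.rpow_mul_natCast (by positivity), hq_def]
    ring_nf
  rw [square, inv_mul_le_iff₀ (by positivity), ← mul_pow, ← mul_pow]
  exact ⟨pow_le_pow_left₀ (norm_nonneg _) (norm_radialPow_sub_le hq hmax) 2,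
    pow_le_pow_left₀ (by positivity) (add_rpow_mul_norm_sub_le_radialPow hq hmax) 2⟩

/-- The equivalence `|V(A)-V(B)|² ≈ (|A|+|B|)^{p-2}|A-B|²`, with constants
depending only on `p`. -/
theorem stmt15 (p : ℝ) (hp : 1 < p) :
    ∃ c C : ℝ, 0 < c ∧ 0 < C ∧
      ∀ (n : ℕ) (A B : EuclideanSpace ℝ (Fin n)), (A, B) ≠ (0, 0) →
        c * ‖Vm p A - Vm p B‖ ^ 2 ≤ (‖A‖ + ‖B‖) ^ (p - 2) * ‖A - B‖ ^ 2 ∧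
        (‖A‖ + ‖B‖) ^ (p - 2) * ‖A - B‖ ^ 2 ≤ C * ‖Vm p A - Vm p B‖ ^ 2 := by
  obtain ⟨c, C, hc, hC, equivalence⟩ := stmt15_general p (by linarith)
  exact ⟨c, C, hc, hC, fun n A B hAB ↦ by
    simpa only [Vm_eq_radialPow] using equivalence (EuclideanSpace ℝ (Fin n)) A B hAB⟩
end
end
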